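/- arXiv:0910.2013 — 2 statements merged into one kernel-verified Lean document; each statement's English description precedes it below -/
import Mathlib

section
/- For every integer N ≥ 1, the infimum of the Rayleigh quotient ⟨v', v'⟩ / ⟨v, v⟩ over v ∈ U \ {0} equals 4 N² sin²(π/(4N)), this value is at least 2, and the infimum is attained at the vector v given by v_ℓ = sin((N − ℓ)π/(2N)) for ℓ = −N,…,N. -/
/-!
Write `S_ℓ = sin((N-ℓ)π/(2N))` and `μ = 4 sin²(π/(4N))`. The addition formulas give
`S_{ℓ+1} + S_{ℓ-1} = (2 - μ) S_ℓ` (`prof_rec`), and `S` is positive for `-N < ℓ < N`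
(`prof_pos`). Hence for `v ∈ U` the discrete Picone identity
`(v_ℓ - v_{ℓ-1})² = μ v_ℓ² + (φ_ℓ - φ_{ℓ-1}) + S_{ℓ-1} S_ℓ (v_ℓ / S_ℓ - v_{ℓ-1} / S_{ℓ-1})²`
with `φ_ℓ = v_ℓ² (S_{ℓ+1} / S_ℓ - 1)` holds in the interior, and the last term drops out at the
two ends. Discarding the square (`picone`) and summing, the `φ` terms telescope to zero, which
yields `⟨v', v'⟩ ≥ N² μ ⟨v, v⟩`; for `v = S` the square vanishes and equality holds
(`picone_vmin`). The bound `N² μ ≥ 2` is the concavity of `sin` on `[0, π]`, through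
`sin(π/(4N)) ≥ sin(π/4) / N`.
-/

open Finset

noncomputable section

/-- lattice spacing ε = 1/N -/
def eps (N : ℕ) : ℝ := 1 / N

/-- membership in the displacement space U -/
def memU (N : ℕ) (u : ℤ → ℝ) : Prop :=
  ∀ j : ℤ, ((N : ℤ) ≤ j ∨ j ≤ -(N : ℤ)) → u j = 0

/-- backward first difference -/
def D1 (N : ℕ) (u : ℤ → ℝ) (ℓ : ℤ) : ℝ := (u ℓ - u (ℓ - 1)) / eps N

/-- the ℓ²_ε inner product ⟨v,w⟩ -/
def ipE (N : ℕ) (v w : ℤ → ℝ) : ℝ :=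
  eps N * ∑ ℓ ∈ Icc (-(N : ℤ) + 1) (N : ℤ), v ℓ * w ℓ

/-- ⟨v',v'⟩ = ε Σ (v'_ℓ)² -/
def dnormSq (N : ℕ) (u : ℤ → ℝ) : ℝ :=
  eps N * ∑ ℓ ∈ Icc (-(N : ℤ) + 1) (N : ℤ), (D1 N u ℓ) ^ 2

/-- the minimizer v_ℓ = sin((N−ℓ)π/(2N)) of the Rayleigh quotient (extended by 0) -/
def vmin (N : ℕ) : ℤ → ℝ := fun ℓ =>
  if -(N : ℤ) ≤ ℓ ∧ ℓ ≤ (N : ℤ) then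
    Real.sin (((N : ℝ) - (ℓ : ℝ)) * Real.pi / (2 * N))
  else 0

/-- The untruncated profile `S_ℓ = sin((N-ℓ)π/(2N))`, defined on all of `ℤ` so that the three-term
recurrence `prof_rec` holds also at the endpoints `±N`. -/
def prof (N : ℕ) (ℓ : ℤ) : ℝ := Real.sin (((N : ℝ) - (ℓ : ℝ)) * Real.pi / (2 * N))

/-- `prof` is an eigenvector of the negative discrete Laplacian for the eigenvalue `4 sin²(π/(4N))`. -/
lemma prof_rec (N : ℕ) (hN : 1 ≤ N) (ℓ : ℤ) :
    prof N (ℓ + 1) + prof N (ℓ - 1) = (2 - 4 * Real.sin (Real.pi / (4 * N)) ^ 2) * prof N ℓ := by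
  have hN0 : (N : ℝ) ≠ 0 := by positivity
  have hc : 2 - 4 * Real.sin (Real.pi / (4 * N)) ^ 2 = 2 * Real.cos (Real.pi / (2 * N)) := by
    have h : Real.pi / (2 * N) = 2 * (Real.pi / (4 * N)) := by field_simp; norm_num
    rw [h, Real.cos_two_mul, Real.cos_sq']
    ring
  have h1 : ((N : ℝ) - ((ℓ + 1 : ℤ) : ℝ)) * Real.pi / (2 * N)
      = ((N : ℝ) - (ℓ : ℝ)) * Real.pi / (2 * N) - Real.pi / (2 * N) := by
    push_cast; ring
  have h2 : ((N : ℝ) - ((ℓ - 1 : ℤ) : ℝ)) * Real.pi / (2 * N)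
      = ((N : ℝ) - (ℓ : ℝ)) * Real.pi / (2 * N) + Real.pi / (2 * N) := by
    push_cast; ring
  rw [hc]
  unfold prof
  rw [h1, h2, Real.sin_sub, Real.sin_add]
  ring

lemma prof_pos (N : ℕ) (ℓ : ℤ) (h1 : -(N : ℤ) < ℓ) (h2 : ℓ < N) : 0 < prof N ℓ := by
  have hN0 : (0 : ℝ) < N := by
    have : (0 : ℤ) < N := by omega
    exact_mod_cast this
  have h1' : -(N : ℝ) < ℓ := by exact_mod_cast h1
  have h2' : (ℓ : ℝ) < N := by exact_mod_cast h2
  apply Real.sin_pos_of_pos_of_lt_pi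
  · have := sub_pos.2 h2'
    positivity
  · rw [div_lt_iff₀ (by positivity)]
    nlinarith [Real.pi_pos]

lemma prof_right (N : ℕ) : prof N N = 0 := by simp [prof]

lemma prof_left (N : ℕ) (hN : 1 ≤ N) : prof N (-(N : ℤ)) = 0 := by
  have hN0 : (N : ℝ) ≠ 0 := by positivity
  have h : ((N : ℝ) - ((-(N : ℤ) : ℤ) : ℝ)) * Real.pi / (2 * N) = Real.pi := by
    push_cast; field_simp; ring
  rw [prof, h, Real.sin_pi]

lemma vmin_eq_prof (N : ℕ) (ℓ : ℤ) (h1 : -(N : ℤ) ≤ ℓ) (h2 : ℓ ≤ N) :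
    vmin N ℓ = prof N ℓ := by
  simp [vmin, prof, h1, h2]

lemma memU_vmin (N : ℕ) (hN : 1 ≤ N) : memU N (vmin N) := by
  intro j hj
  by_cases h : -(N : ℤ) ≤ j ∧ j ≤ N
  · rw [vmin_eq_prof N j h.1 h.2]
    obtain rfl | rfl : j = N ∨ j = -(N : ℤ) := by omega
    · exact prof_right N
    · exact prof_left N hN
  · simp only [vmin, if_neg h]

lemma vmin_ne_zero (N : ℕ) (hN : 1 ≤ N) : vmin N ≠ 0 := by
  intro h
  have h0 := prof_pos N 0 (by omega) (by omega)
  rw [← vmin_eq_prof N 0 (by omega) (by omega), h] at h0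
  simp at h0

lemma sum_Icc_telescope (h : ℤ → ℝ) (a : ℤ) (n : ℕ) :
    ∑ ℓ ∈ Icc (a + 1) (a + n), (h ℓ - h (ℓ - 1)) = h (a + n) - h a := by
  induction n with
  | zero => simp
  | succ k ih =>
    have e : Icc (a + 1) (a + (k + 1 : ℕ)) = insert (a + k + 1) (Icc (a + 1) (a + k)) := by
      ext x; simp only [mem_Icc, mem_insert]; omega
    have e' : a + ((k + 1 : ℕ) : ℤ) = a + k + 1 := by push_cast; ring
    rw [e, sum_insert (by simp), ih, e', add_sub_cancel_right]
    ring

/-- The telescoping remainder in the discrete Picone identity. Its division by zero is harmless: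
for `v ∈ U`, `prof N ℓ` vanishes only where `v ℓ` does. -/
def flux (N : ℕ) (v : ℤ → ℝ) (ℓ : ℤ) : ℝ := v ℓ ^ 2 * (prof N (ℓ + 1) / prof N ℓ - 1)

/-- Elements of `U` make the fluxes through both ends vanish. -/
lemma sum_flux (N : ℕ) (v : ℤ → ℝ) (hv : memU N v) :
    ∑ ℓ ∈ Icc (-(N : ℤ) + 1) (N : ℤ), (flux N v ℓ - flux N v (ℓ - 1)) = 0 := by
  have h := sum_Icc_telescope (flux N v) (-(N : ℤ)) (2 * N)
  have e : -(N : ℤ) + (2 * N : ℕ) = N := by push_cast; ring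
  rw [e] at h
  rw [h, flux, flux, hv N (by simp), hv (-(N : ℤ)) (by simp)]
  ring

/-- By the eigenvalue recurrence, `flux` can be rewritten through the left neighbour. -/
lemma flux_eq (N : ℕ) (hN : 1 ≤ N) (v : ℤ → ℝ) (hv : memU N v) (ℓ : ℤ) :
    flux N v ℓ = v ℓ ^ 2 * (1 - prof N (ℓ - 1) / prof N ℓ
      - 4 * Real.sin (Real.pi / (4 * N)) ^ 2) := by
  by_cases h : (N : ℤ) ≤ ℓ ∨ ℓ ≤ -(N : ℤ)
  · simp [flux, hv ℓ h]
  · have hp := prof_pos N ℓ (by omega) (by omega)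
    have hr := prof_rec N hN ℓ
    have : prof N (ℓ + 1) / prof N ℓ - 1 = 1 - prof N (ℓ - 1) / prof N ℓ
        - 4 * Real.sin (Real.pi / (4 * N)) ^ 2 := by
      field_simp
      linarith
    rw [flux, this]

/-- Pointwise discrete Picone inequality. In the interior the defect is
`S_{ℓ-1} S_ℓ (v_ℓ / S_ℓ - v_{ℓ-1} / S_{ℓ-1})²`. -/
lemma picone (N : ℕ) (hN : 1 ≤ N) (v : ℤ → ℝ) (hv : memU N v) (ℓ : ℤ) :
    4 * Real.sin (Real.pi / (4 * N)) ^ 2 * v ℓ ^ 2 + (flux N v ℓ - flux N v (ℓ - 1))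
      ≤ (v ℓ - v (ℓ - 1)) ^ 2 := by
  rw [flux_eq N hN v hv ℓ, flux, sub_add_cancel]
  by_cases h : (N : ℤ) ≤ ℓ ∨ ℓ ≤ -(N : ℤ)
  · rw [hv ℓ h]
    by_cases h' : (N : ℤ) ≤ ℓ - 1 ∨ ℓ - 1 ≤ -(N : ℤ)
    · simp [hv _ h']
    · have : ℓ = N := by omega
      rw [this, prof_right]
      simp
  by_cases h' : (N : ℤ) ≤ ℓ - 1 ∨ ℓ - 1 ≤ -(N : ℤ)
  · have : ℓ - 1 = -(N : ℤ) := by omega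
    rw [hv _ h', this, prof_left N hN]
    simp only [zero_div]
    linarith
  have hp := prof_pos N ℓ (by omega) (by omega)
  have hq := prof_pos N (ℓ - 1) (by omega) (by omega)
  have key : 0 ≤ prof N (ℓ - 1) * prof N ℓ
      * (v ℓ / prof N ℓ - v (ℓ - 1) / prof N (ℓ - 1)) ^ 2 := by positivity
  have e : prof N (ℓ - 1) * prof N ℓ
      * (v ℓ / prof N ℓ - v (ℓ - 1) / prof N (ℓ - 1)) ^ 2
      = v ℓ ^ 2 * (prof N (ℓ - 1) / prof N ℓ) - 2 * v ℓ * v (ℓ - 1)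
        + v (ℓ - 1) ^ 2 * (prof N ℓ / prof N (ℓ - 1)) := by
    field_simp
    ring
  linarith

/-- The Picone inequality is an equality for `vmin`. -/
lemma picone_vmin (N : ℕ) (hN : 1 ≤ N) (ℓ : ℤ) (hl : ℓ ∈ Icc (-(N : ℤ) + 1) (N : ℤ)) :
    4 * Real.sin (Real.pi / (4 * N)) ^ 2 * vmin N ℓ ^ 2
        + (flux N (vmin N) ℓ - flux N (vmin N) (ℓ - 1))
      = (vmin N ℓ - vmin N (ℓ - 1)) ^ 2 := by
  rw [mem_Icc] at hl
  rw [flux_eq N hN _ (memU_vmin N hN) ℓ, flux, sub_add_cancel,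
    vmin_eq_prof N ℓ (by omega) hl.2, vmin_eq_prof N (ℓ - 1) (by omega) (by omega)]
  -- Where the profile vanishes, `0 / 0 = 0` is multiplied by `0`, so no case is lost.
  have hdiv : ∀ a b : ℝ, a ^ 2 * (b / a) = a * b := by
    intro a b
    by_cases ha : a = 0
    · simp [ha]
    · field_simp
  have h1 := hdiv (prof N ℓ) (prof N (ℓ - 1))
  have h2 := hdiv (prof N (ℓ - 1)) (prof N ℓ)
  linarith

lemma dnormSq_eq (N : ℕ) (v : ℤ → ℝ) :
    dnormSq N v = eps N * ((N : ℝ) ^ 2 *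
      ∑ ℓ ∈ Icc (-(N : ℤ) + 1) (N : ℤ), (v ℓ - v (ℓ - 1)) ^ 2) := by
  rw [dnormSq, mul_sum _ _ ((N : ℝ) ^ 2)]
  congr 1
  refine sum_congr rfl fun ℓ _ => ?_
  simp only [D1, eps, one_div, div_inv_eq_mul]
  ring

lemma ipE_pos (N : ℕ) (hN : 1 ≤ N) (v : ℤ → ℝ) (hv : memU N v) (h0 : v ≠ 0) :
    0 < ipE N v v := by
  have hN0 : (0 : ℝ) < N := by positivity
  obtain ⟨j, hj⟩ := Function.ne_iff.1 h0
  have hj' : v j ≠ 0 := hj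
  have hmem : j ∈ Icc (-(N : ℤ) + 1) (N : ℤ) := by
    by_contra hc
    rw [mem_Icc] at hc
    exact hj' (hv j (by omega))
  refine mul_pos (by unfold eps; positivity) (sum_pos' (fun i _ => mul_self_nonneg _) ?_)
  exact ⟨j, hmem, mul_self_pos.2 hj'⟩

lemma rayleigh_lower (N : ℕ) (hN : 1 ≤ N) (v : ℤ → ℝ) (hv : memU N v) :
    4 * (N : ℝ) ^ 2 * Real.sin (Real.pi / (4 * N)) ^ 2 * ipE N v v ≤ dnormSq N v := by
  have hs := sum_le_sum fun ℓ (_ : ℓ ∈ Icc (-(N : ℤ) + 1) (N : ℤ)) => picone N hN v hv ℓ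
  rw [sum_add_distrib, sum_flux N v hv, ← mul_sum, add_zero] at hs
  have heps : 0 ≤ eps N := by unfold eps; positivity
  have := mul_le_mul_of_nonneg_left (mul_le_mul_of_nonneg_left hs (sq_nonneg (N : ℝ))) heps
  rw [dnormSq_eq]
  refine le_trans (le_of_eq ?_) this
  simp only [ipE, ← pow_two]
  ring

lemma rayleigh_vmin (N : ℕ) (hN : 1 ≤ N) :
    dnormSq N (vmin N)
      = 4 * (N : ℝ) ^ 2 * Real.sin (Real.pi / (4 * N)) ^ 2 * ipE N (vmin N) (vmin N) := by
  have hs := sum_congr rfl (picone_vmin N hN)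
  rw [sum_add_distrib, sum_flux N _ (memU_vmin N hN), ← mul_sum, add_zero] at hs
  rw [dnormSq_eq, ← hs]
  simp only [ipE, ← pow_two]
  ring

/-- The eigenvalue is smallest at `N = 1`: since `sin` is concave on `[0, π]`,
`sin(π/(4N)) ≥ sin(π/4) / N`. -/
lemma two_le_eigenvalue (N : ℕ) (hN : 1 ≤ N) :
    2 ≤ 4 * (N : ℝ) ^ 2 * Real.sin (Real.pi / (4 * N)) ^ 2 := by
  have hN1 : (1 : ℝ) ≤ N := by exact_mod_cast hN
  have hN0 : (0 : ℝ) < N := by linarith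
  have hpi := Real.pi_pos
  have hinv : 1 / (N : ℝ) ≤ 1 := by rw [div_le_one hN0]; exact hN1
  have h0 : 0 ≤ 1 / (N : ℝ) := by positivity
  have hx : Real.pi / 4 ∈ Set.Icc 0 Real.pi := ⟨by linarith, by linarith⟩
  have hy : (0 : ℝ) ∈ Set.Icc 0 Real.pi := ⟨le_refl _, hpi.le⟩
  have h := strictConcaveOn_sin_Icc.concaveOn.2 hx hy h0 (sub_nonneg.2 hinv)
    (add_sub_cancel _ _)
  have e : 1 / (N : ℝ) * (Real.pi / 4) = Real.pi / (4 * N) := by field_simp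
  simp only [smul_eq_mul, Real.sin_zero, mul_zero, add_zero, e, Real.sin_pi_div_four] at h
  have h2 : √2 / 2 ≤ N * Real.sin (Real.pi / (4 * N)) := by
    rw [one_div, inv_mul_le_iff₀ hN0] at h
    exact h
  have h3 := pow_le_pow_left₀ (by positivity) h2 2
  rw [div_pow, Real.sq_sqrt (by norm_num), mul_pow] at h3
  linarith

/-- The infimum of the Rayleigh quotient ⟨v',v'⟩/⟨v,v⟩ over U \ {0} equals
4N² sin²(π/(4N)), is at least 2, and is attained at v_ℓ = sin((N−ℓ)π/(2N)). -/
theorem stmt9 (N : ℕ) (hN : 1 ≤ N) :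
    sInf {x : ℝ | ∃ v : ℤ → ℝ, memU N v ∧ v ≠ 0 ∧ x = dnormSq N v / ipE N v v}
        = 4 * (N : ℝ) ^ 2 * Real.sin (Real.pi / (4 * N)) ^ 2
    ∧ 2 ≤ 4 * (N : ℝ) ^ 2 * Real.sin (Real.pi / (4 * N)) ^ 2
    ∧ memU N (vmin N) ∧ vmin N ≠ 0
    ∧ dnormSq N (vmin N) / ipE N (vmin N) (vmin N)
        = 4 * (N : ℝ) ^ 2 * Real.sin (Real.pi / (4 * N)) ^ 2 := by
  have hpos := ipE_pos N hN (vmin N) (memU_vmin N hN) (vmin_ne_zero N hN)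
  have hatt : dnormSq N (vmin N) / ipE N (vmin N) (vmin N)
      = 4 * (N : ℝ) ^ 2 * Real.sin (Real.pi / (4 * N)) ^ 2 := by
    rw [div_eq_iff hpos.ne', rayleigh_vmin N hN]
  refine ⟨IsLeast.csInf_eq ⟨?_, ?_⟩, two_le_eigenvalue N hN, memU_vmin N hN,
    vmin_ne_zero N hN, hatt⟩
  · exact ⟨vmin N, memU_vmin N hN, vmin_ne_zero N hN, hatt.symm⟩
  · rintro x ⟨v, hv, h0, rfl⟩
    rw [le_div_iff₀ (ipE_pos N hN v hv h0)]
    exact rayleigh_lower N hN v hv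

end
end

section
/- Assume 1 ≤ K ≤ N−2 and A_F > 0. Then the generalized eigenvalue problem L^qnl v = μ L v, v ∈ U \ {0}, has exactly 2N−1 eigenvalues counted with multiplicity, and the multiset of these eigenvalues is { A_F − 4 φ''_{2F} sin²(jπ/(4K+4)) : j = 1,…,2K+1 } together with the value A_F repeated 2N−2K−2 times. In particular, if in addition φ''_{2F} ≤ 0, then the ratio of the largest to the smallest eigenvalue equals 1 − (4 φ''_{2F}/A_F) sin²((2K+1)π/(4K+4)) = φ''_F/A_F + (4 φ''_{2F}/A_F) sin²(π/(4K+4)), and all eigenvalues lie in the interval [A_F, φ''_F]. -/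
/-!
The operator factors through the discrete Laplacian `L`. With `χ` the cutoff to the sites `|j| ≤ K`,
the second sum in the form is `⟨L χ L u, v⟩` up to a power of `ε`, because
`u'_{ℓ+1} - u'_ℓ = -ε (L u)_ℓ`. Hence `L^qnl = A_F L - φ''_{2F} L (ε² χ L)` (`T_eq`), and as `L`
is injective (`LapE_injective`), the problem `L^qnl v = μ L v` reduces to diagonalising `ε² χ L`.

This operator has an explicit eigenbasis of `U` (`eigE_linearIndependent`). The `2K+1` Dirichlet
sine modes of the segment `[-K-1, K+1]`, extended by zero, have the eigenvalues
`4 sin²(jπ/(4K+4))` (`cutE_sineE`). The remaining `2N-2K-2` vectors, one for each site with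
`K < |i| < N`, are affine on `[-K-1, K+1]` and thus lie in the kernel (`cutE_hatE`). Multiplicities
are read off from this basis by `finrank_ker_of_eigenfamily`; the extremal eigenvalues follow from
the monotonicity of `sin²` on `[0, π/2]` (`sin_sq_lt`).
-/

open Finset

noncomputable section

attribute [local instance] Classical.propDecidable

/-- the displacement space U as a submodule of ℤ → ℝ -/
def Usub (N : ℕ) : Submodule ℝ (ℤ → ℝ) where
  carrier := {u | ∀ j : ℤ, ((N : ℤ) ≤ j ∨ j ≤ -(N : ℤ)) → u j = 0}
  add_mem' := by
    intro a b ha hb j hj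
    simp [Pi.add_apply, ha j hj, hb j hj]
  zero_mem' := by intro j hj; rfl
  smul_mem' := by
    intro c a ha j hj
    simp [Pi.smul_apply, ha j hj]

lemma mem_Usub {N : ℕ} {u : ℤ → ℝ} :
    u ∈ Usub N ↔ ∀ j : ℤ, ((N : ℤ) ≤ j ∨ j ≤ -(N : ℤ)) → u j = 0 := Iff.rfl

/-- the ℓ²_ε norm -/
def normE (N : ℕ) (v : ℤ → ℝ) : ℝ :=
  Real.sqrt (eps N * ∑ ℓ ∈ Icc (-(N : ℤ) + 1) (N : ℤ), (v ℓ) ^ 2)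

/-- the QNL bilinear form -/
def Bqnl (N K : ℕ) (φF φ2F : ℝ) (u v : ℤ → ℝ) : ℝ :=
  (φF + 4 * φ2F) * (eps N * ∑ ℓ ∈ Icc (-(N : ℤ) + 1) (N : ℤ), D1 N u ℓ * D1 N v ℓ)
    - φ2F * (eps N * ∑ ℓ ∈ Icc (-(K : ℤ)) (K : ℤ),
        (D1 N u (ℓ + 1) - D1 N u ℓ) * (D1 N v (ℓ + 1) - D1 N v ℓ))

/-- the discrete Laplacian, pointwise -/
def lapFun (N : ℕ) (v : ℤ → ℝ) (j : ℤ) : ℝ :=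
  if -(N : ℤ) + 1 ≤ j ∧ j ≤ (N : ℤ) - 1 then
    (-v (j + 1) + 2 * v j - v (j - 1)) / (eps N) ^ 2
  else 0

/-- the discrete Laplacian as a linear map on ℤ → ℝ -/
def lapLin (N : ℕ) : (ℤ → ℝ) →ₗ[ℝ] (ℤ → ℝ) where
  toFun v := lapFun N v
  map_add' u v := by
    funext j
    simp only [lapFun, Pi.add_apply]
    split_ifs <;> ring
  map_smul' c v := by
    funext j
    simp only [lapFun, Pi.smul_apply, smul_eq_mul, RingHom.id_apply]
    split_ifs <;> ring

lemma lap_mem (N : ℕ) (v : ℤ → ℝ) : lapLin N v ∈ Usub N := by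
  rw [mem_Usub]
  intro j hj
  show lapFun N v j = 0
  unfold lapFun
  rw [if_neg (by omega)]

/-- the discrete Laplacian as an endomorphism of U -/
def LapE (N : ℕ) : Module.End ℝ ↥(Usub N) :=
  (lapLin N).restrict (fun v _ => lap_mem N v)

/-- the multiset of generalized eigenvalues of the QNL operator:
A_F − 4φ''_{2F} sin²(jπ/(4K+4)) for j = 1,…,2K+1, together with A_F repeated
2N−2K−2 times. -/
def specMul (N K : ℕ) (φF φ2F : ℝ) : Multiset ℝ :=
  (Finset.Icc 1 (2 * K + 1)).val.map
      (fun j : ℕ => (φF + 4 * φ2F)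
        - 4 * φ2F * Real.sin ((j : ℝ) * Real.pi / (4 * (K : ℝ) + 4)) ^ 2)
    + Multiset.replicate (2 * N - 2 * K - 2) (φF + 4 * φ2F)

/-! ### Multiplicities from a complete family of generalized eigenvectors -/

/-- If `L` is injective and `b` is a basis-sized independent family of generalized eigenvectors,
the eigenspace for `μ` is spanned by the members of the family whose eigenvalue is `μ`. -/
lemma finrank_ker_of_eigenfamily {V ι : Type*} [AddCommGroup V] [Module ℝ V]
    [FiniteDimensional ℝ V] [Fintype ι] (T L : Module.End ℝ V) (hL : Function.Injective L)
    (b : ι → V) (hb : LinearIndependent ℝ b) (hc : Fintype.card ι = Module.finrank ℝ V)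
    (lam : ι → ℝ) (hTb : ∀ i, T (b i) = lam i • L (b i)) (μ : ℝ) :
    Module.finrank ℝ ↥(LinearMap.ker (T - μ • L)) = Fintype.card {i // lam i = μ} := by
  have hspan : LinearMap.ker (T - μ • L)
      = Submodule.span ℝ (Set.range fun i : {i // lam i = μ} => b i) := by
    apply le_antisymm
    · intro x hx
      have htop : x ∈ Submodule.span ℝ (Set.range b) := by
        rw [hb.span_eq_top_of_card_eq_finrank' hc]; trivial
      obtain ⟨c, rfl⟩ := (Submodule.mem_span_range_iff_exists_fun ℝ).1 htop
      have h0 : L (∑ i, (c i * (lam i - μ)) • b i) = 0 := by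
        rw [LinearMap.mem_ker] at hx
        rw [← hx]
        simp only [LinearMap.sub_apply, LinearMap.smul_apply, map_sum, map_smul, hTb,
          smul_smul, ← sub_smul]
      have h1 := Fintype.linearIndependent_iff.1 hb _ (hL (h0.trans (map_zero L).symm))
      refine Submodule.sum_mem _ fun i _ => ?_
      by_cases hi : lam i = μ
      · exact Submodule.smul_mem _ _ (Submodule.subset_span ⟨⟨i, hi⟩, rfl⟩)
      · have : c i = 0 := (mul_eq_zero.1 (h1 i)).resolve_right (sub_ne_zero.2 hi)
        rw [this, zero_smul]; exact Submodule.zero_mem _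
    · rw [Submodule.span_le]
      rintro _ ⟨⟨i, hi⟩, rfl⟩
      simp [hTb, hi]
  rw [hspan]
  exact finrank_span_eq_card (hb.comp _ Subtype.val_injective)

/-! ### The displacement space and the discrete Laplacian -/

/-- `U` is coordinatised by the values at the `2N-1` interior sites. -/
def interiorEquiv (N : ℕ) :
    ↥(Usub N) ≃ₗ[ℝ] (↥(Icc (-(N : ℤ) + 1) ((N : ℤ) - 1)) → ℝ) where
  toFun u i := (u : ℤ → ℝ) i
  map_add' _ _ := rfl
  map_smul' _ _ := rfl
  invFun f := ⟨fun i => if h : i ∈ Icc (-(N : ℤ) + 1) ((N : ℤ) - 1) then f ⟨i, h⟩ else 0, by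
    intro j hj
    have : j ∉ Icc (-(N : ℤ) + 1) ((N : ℤ) - 1) := by simp only [mem_Icc]; omega
    simp only [this, dite_false]⟩
  left_inv u := by
    ext i
    by_cases h : i ∈ Icc (-(N : ℤ) + 1) ((N : ℤ) - 1)
    · simp only [h, dite_true]
    · simp only [h, dite_false]
      refine (u.2 i ?_).symm
      simp only [mem_Icc] at h; omega
  right_inv f := by
    funext i
    simp only [i.2, dite_true]

instance (N : ℕ) : FiniteDimensional ℝ ↥(Usub N) :=
  Module.Finite.equiv (interiorEquiv N).symm

lemma finrank_Usub (N : ℕ) (hN : 2 ≤ N) : Module.finrank ℝ ↥(Usub N) = 2 * N - 1 := by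
  rw [(interiorEquiv N).finrank_eq, Module.finrank_fintype_fun_eq_card, Fintype.card_coe,
    Int.card_Icc]
  omega

lemma eps_pos {N : ℕ} (hN : 2 ≤ N) : 0 < eps N := by
  unfold eps
  have : (0 : ℝ) < N := by exact_mod_cast (by omega : 0 < N)
  positivity

lemma LapE_apply (N : ℕ) (u : ↥(Usub N)) (j : ℤ) :
    (LapE N u : ℤ → ℝ) j = lapFun N u j := rfl

/-- A function with vanishing second difference is affine; the two boundary values then force
it to be zero. -/
lemma LapE_injective (N : ℕ) (hN : 2 ≤ N) : Function.Injective (LapE N) := by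
  rw [← LinearMap.ker_eq_bot, LinearMap.ker_eq_bot']
  intro u hu
  have he := eps_pos hN
  have hrec : ∀ j : ℤ, -(N : ℤ) + 1 ≤ j → j ≤ (N : ℤ) - 1 →
      (u : ℤ → ℝ) (j + 1) = 2 * (u : ℤ → ℝ) j - (u : ℤ → ℝ) (j - 1) := by
    intro j h1 h2
    have h : (LapE N u : ℤ → ℝ) j = 0 := by rw [hu]; rfl
    rw [LapE_apply, lapFun, if_pos ⟨h1, h2⟩, div_eq_zero_iff] at h
    have := h.resolve_right (by positivity)
    linarith
  have h0 : (u : ℤ → ℝ) (-(N : ℤ)) = 0 := u.2 _ (Or.inr le_rfl)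
  set c := (u : ℤ → ℝ) (-(N : ℤ) + 1) with hc
  have key : ∀ m : ℕ, m + 1 ≤ 2 * N → (u : ℤ → ℝ) (-(N : ℤ) + m) = m * c ∧
      (u : ℤ → ℝ) (-(N : ℤ) + (m + 1)) = (m + 1) * c := by
    intro m
    induction m with
    | zero => intro _; simp [h0, hc]
    | succ m ih =>
      intro hm
      obtain ⟨i1, i2⟩ := ih (by omega)
      push_cast
      refine ⟨i2, ?_⟩
      have := hrec (-(N : ℤ) + (m + 1)) (by omega) (by omega)
      rw [show -(N : ℤ) + (m + 1) + 1 = -(N : ℤ) + (m + 1 + 1) by ring,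
        show -(N : ℤ) + ((m : ℤ) + 1) - 1 = -(N : ℤ) + m by ring, i1, i2] at this
      rw [this]; ring
  have hc0 : c = 0 := by
    have h := (key (2 * N - 1) (by omega)).2
    rw [u.2 _ (Or.inl (by omega))] at h
    have : ((2 * N - 1 : ℕ) : ℝ) + 1 ≠ 0 := by positivity
    exact (mul_eq_zero.1 h.symm).resolve_left this
  ext j
  by_cases hj : -(N : ℤ) ≤ j ∧ j + 1 ≤ N
  · obtain ⟨m, hm⟩ := Int.eq_ofNat_of_zero_le (show 0 ≤ j + N by omega)
    have h := (key m (by omega)).1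
    rw [hc0, show -(N : ℤ) + m = j by omega] at h
    simpa using h
  · exact u.2 j (by omega)

/-! ### Factorisation of the quasi-nonlocal operator -/

/-- The second difference `ε² L v`, cut off to the sites `|j| ≤ K`. -/
def cutFun (K : ℕ) (v : ℤ → ℝ) (j : ℤ) : ℝ :=
  if -(K : ℤ) ≤ j ∧ j ≤ (K : ℤ) then -v (j + 1) + 2 * v j - v (j - 1) else 0

/-- `ε²χL` as an endomorphism of `U`, with `χ` the indicator of the sites `|j| ≤ K`. -/
def cutE (N K : ℕ) (hK : (K : ℤ) ≤ (N : ℤ) - 2) : Module.End ℝ ↥(Usub N) where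
  toFun u := ⟨cutFun K u, fun j hj => if_neg (by omega)⟩
  map_add' u v := by
    ext j
    simp only [cutFun, Submodule.coe_add, Pi.add_apply]
    split_ifs <;> ring
  map_smul' c v := by
    ext j
    simp only [cutFun, Submodule.coe_smul, Pi.smul_apply, smul_eq_mul, RingHom.id_apply]
    split_ifs <;> ring

lemma cutE_apply (N K : ℕ) (hK : (K : ℤ) ≤ (N : ℤ) - 2) (u : ↥(Usub N)) (j : ℤ) :
    (cutE N K hK u : ℤ → ℝ) j = cutFun K u j := rfl

/-- The factorisation `L^qnl = A_F L - φ''_{2F} ε² L χ L`, read off by testing the form against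
the unit displacement at each interior site. -/
lemma T_eq (N K : ℕ) (hN : 2 ≤ N) (hK : (K : ℤ) ≤ (N : ℤ) - 2) (φF φ2F : ℝ)
    (T : Module.End ℝ ↥(Usub N))
    (hT : ∀ u v : ↥(Usub N), ipE N ((T u : ℤ → ℝ)) (v : ℤ → ℝ)
            = Bqnl N K φF φ2F (u : ℤ → ℝ) (v : ℤ → ℝ)) (u : ↥(Usub N)) :
    T u = (φF + 4 * φ2F) • LapE N u - φ2F • LapE N (cutE N K hK u) := by
  ext i
  by_cases hi : -(N : ℤ) + 1 ≤ i ∧ i ≤ (N : ℤ) - 1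
  swap
  · rw [(T u).2 i (by omega)]
    exact (Submodule.coe_mem ((φF + 4 * φ2F) • LapE N u - φ2F • LapE N (cutE N K hK u)) i
      (by omega)).symm
  have he := (eps_pos hN).ne'
  let v : ↥(Usub N) := ⟨fun j => if j = i then 1 else 0, fun j hj => if_neg (by omega)⟩
  have h := hT u v
  have e1 : ipE N (T u : ℤ → ℝ) (v : ℤ → ℝ) = eps N * (T u : ℤ → ℝ) i := by
    simp only [ipE, v, mul_ite, mul_one, mul_zero, Finset.sum_ite_eq']
    rw [if_pos (by simp only [mem_Icc]; omega)]
  have e2 : ∑ ℓ ∈ Icc (-(N : ℤ) + 1) (N : ℤ), D1 N u ℓ * D1 N v ℓ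
      = (D1 N u i - D1 N u (i + 1)) / eps N := by
    have : ∀ ℓ, D1 N u ℓ * D1 N v ℓ = (if ℓ = i then D1 N u ℓ / eps N else 0)
        - (if ℓ = i + 1 then D1 N u ℓ / eps N else 0) := by
      intro ℓ
      have : (ℓ - 1 = i) ↔ (ℓ = i + 1) := by omega
      simp only [D1, v, this]
      split_ifs <;> ring
    simp only [this, Finset.sum_sub_distrib, Finset.sum_ite_eq']
    rw [if_pos (by simp only [mem_Icc]; omega), if_pos (by simp only [mem_Icc]; omega)]
    ring
  have e3 : ∑ ℓ ∈ Icc (-(K : ℤ)) (K : ℤ),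
        (D1 N u (ℓ + 1) - D1 N u ℓ) * (D1 N v (ℓ + 1) - D1 N v ℓ)
      = (-cutFun K u (i + 1) + 2 * cutFun K u i - cutFun K u (i - 1)) / eps N ^ 2 := by
    have hg : ∀ ℓ, D1 N u (ℓ + 1) - D1 N u ℓ
        = -((-(u : ℤ → ℝ) (ℓ + 1) + 2 * (u : ℤ → ℝ) ℓ - (u : ℤ → ℝ) (ℓ - 1)) / eps N) := by
      intro ℓ
      simp only [D1, add_sub_cancel_right]; ring
    have : ∀ ℓ, (D1 N u (ℓ + 1) - D1 N u ℓ) * (D1 N v (ℓ + 1) - D1 N v ℓ)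
        = (if ℓ = i - 1 then (D1 N u (ℓ + 1) - D1 N u ℓ) / eps N else 0)
        - 2 * (if ℓ = i then (D1 N u (ℓ + 1) - D1 N u ℓ) / eps N else 0)
        + (if ℓ = i + 1 then (D1 N u (ℓ + 1) - D1 N u ℓ) / eps N else 0) := by
      intro ℓ
      have h1 : (ℓ - 1 = i) ↔ (ℓ = i + 1) := by omega
      have h2 : (ℓ + 1 = i) ↔ (ℓ = i - 1) := by omega
      generalize D1 N u (ℓ + 1) - D1 N u ℓ = g
      simp only [D1, v, add_sub_cancel_right, h1, h2]
      split_ifs <;> ring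
    rw [Finset.sum_congr rfl fun ℓ _ => this ℓ]
    simp only [Finset.sum_sub_distrib, Finset.sum_add_distrib, ← Finset.mul_sum,
      Finset.sum_ite_eq', mem_Icc, cutFun]
    simp only [hg]
    split_ifs <;> field_simp <;> ring
  rw [e1, Bqnl, e2, e3] at h
  have h' := mul_left_cancel₀ he (h.trans
    (show _ = eps N * ((φF + 4 * φ2F) * ((D1 N u i - D1 N u (i + 1)) / eps N)
      - φ2F * ((-cutFun K u (i + 1) + 2 * cutFun K u i - cutFun K u (i - 1)) / eps N ^ 2)) by ring))
  rw [h']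
  show _ = (φF + 4 * φ2F) * lapFun N u i - φ2F * lapFun N (cutFun K u) i
  rw [lapFun, lapFun, if_pos hi, if_pos hi]
  simp only [D1, add_sub_cancel_right]
  field_simp
  ring

/-! ### The eigenbasis -/

/-- The discrete Dirichlet sine mode on the sites `|ℓ| ≤ K`. -/
def sineE (N K : ℕ) (hK : (K : ℤ) ≤ (N : ℤ) - 2) (j : ℕ) : ↥(Usub N) :=
  ⟨fun ℓ => if -(K : ℤ) ≤ ℓ ∧ ℓ ≤ (K : ℤ) then
      Real.sin (j * Real.pi * ((ℓ : ℝ) + K + 1) / (2 * K + 2)) else 0,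
    fun ℓ hℓ => if_neg (by omega)⟩

/-- The sine formula also holds at `ℓ = ±(K+1)`, where the sine vanishes. -/
lemma sineE_apply (N K : ℕ) (hK : (K : ℤ) ≤ (N : ℤ) - 2) (j : ℕ) (ℓ : ℤ)
    (h1 : -(K : ℤ) - 1 ≤ ℓ) (h2 : ℓ ≤ K + 1) :
    (sineE N K hK j : ℤ → ℝ) ℓ = Real.sin (j * Real.pi * ((ℓ : ℝ) + K + 1) / (2 * K + 2)) := by
  by_cases h : -(K : ℤ) ≤ ℓ ∧ ℓ ≤ (K : ℤ)
  · exact if_pos h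
  · refine (if_neg h).trans ?_
    rcases (by omega : ℓ = -(K : ℤ) - 1 ∨ ℓ = K + 1) with rfl | rfl
    · push_cast
      rw [show (j * Real.pi * (-(K : ℝ) - 1 + K + 1) / (2 * K + 2)) = 0 by ring, Real.sin_zero]
    · push_cast
      have : (2 * (K : ℝ) + 2) ≠ 0 := by positivity
      rw [show (j * Real.pi * ((K : ℝ) + 1 + K + 1) / (2 * K + 2)) = j * Real.pi by
        field_simp; ring, Real.sin_nat_mul_pi]

lemma cutE_sineE (N K : ℕ) (hK : (K : ℤ) ≤ (N : ℤ) - 2) (j : ℕ) :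
    cutE N K hK (sineE N K hK j)
      = (4 * Real.sin ((j : ℝ) * Real.pi / (4 * (K : ℝ) + 4)) ^ 2) • sineE N K hK j := by
  ext ℓ
  show cutFun K (sineE N K hK j) ℓ = _ * (sineE N K hK j : ℤ → ℝ) ℓ
  by_cases h : -(K : ℤ) ≤ ℓ ∧ ℓ ≤ (K : ℤ)
  · rw [cutFun, if_pos h, sineE_apply _ _ _ _ _ (by omega) (by omega),
      sineE_apply _ _ _ _ _ (by omega) (by omega), sineE_apply _ _ _ _ _ (by omega) (by omega)]
    push_cast
    have hK0 : (K : ℝ) + 1 ≠ 0 := by positivity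
    have hK2 : 2 * (K : ℝ) + 2 ≠ 0 := by positivity
    have hK4 : 4 * (K : ℝ) + 4 ≠ 0 := by positivity
    set x := j * Real.pi * ((ℓ : ℝ) + K + 1) / (2 * K + 2) with hx
    set t := (j : ℝ) * Real.pi / (4 * (K : ℝ) + 4) with ht
    have ht2 : (j : ℝ) * Real.pi / (2 * (K : ℝ) + 2) = 2 * t := by
      rw [ht]; field_simp; ring
    rw [show j * Real.pi * ((ℓ : ℝ) + 1 + K + 1) / (2 * K + 2) = x + 2 * t by
        rw [← ht2, hx]; ring,
      show j * Real.pi * ((ℓ : ℝ) - 1 + K + 1) / (2 * K + 2) = x - 2 * t by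
        rw [← ht2, hx]; ring, Real.sin_add, Real.sin_sub, Real.cos_two_mul, Real.cos_sq']
    ring
  · rw [cutFun, if_neg h]
    have : (sineE N K hK j : ℤ → ℝ) ℓ = 0 := if_neg h
    rw [this, mul_zero]

lemma sineE_ne_zero (N K : ℕ) (hK : (K : ℤ) ≤ (N : ℤ) - 2) (j : ℕ) (h1 : 1 ≤ j)
    (h2 : j ≤ 2 * K + 1) : sineE N K hK j ≠ 0 := by
  intro h
  have h0 := sineE_apply N K hK j (-(K : ℤ)) (by omega) (by omega)
  rw [h] at h0
  have h1' : (1 : ℝ) ≤ j := by exact_mod_cast h1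
  have h2' : (j : ℝ) ≤ 2 * K + 1 := by exact_mod_cast h2
  have hpos : 0 < Real.sin (j * Real.pi * (((-(K : ℤ) : ℤ) : ℝ) + K + 1) / (2 * K + 2)) := by
    push_cast
    have hp := Real.pi_pos
    apply Real.sin_pos_of_pos_of_lt_pi
    · rw [neg_add_cancel, zero_add]; positivity
    · rw [div_lt_iff₀ (by positivity)]; nlinarith
  rw [← h0] at hpos
  exact lt_irrefl _ hpos

lemma sin_sq_lt (K : ℕ) {i j : ℕ} (hij : i < j) (hj : j ≤ 2 * K + 1) :
    Real.sin ((i : ℝ) * Real.pi / (4 * (K : ℝ) + 4)) ^ 2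
      < Real.sin ((j : ℝ) * Real.pi / (4 * (K : ℝ) + 4)) ^ 2 := by
  have hp := Real.pi_pos
  have hj' : (j : ℝ) ≤ 2 * K + 1 := by exact_mod_cast hj
  have hij' : (i : ℝ) < j := by exact_mod_cast hij
  have hlt : (i : ℝ) * Real.pi / (4 * (K : ℝ) + 4) < (j : ℝ) * Real.pi / (4 * (K : ℝ) + 4) := by
    gcongr
  have hle : (j : ℝ) * Real.pi / (4 * (K : ℝ) + 4) ≤ Real.pi / 2 := by
    rw [div_le_div_iff₀ (by positivity) (by positivity)]; nlinarith
  have h0 : 0 ≤ (i : ℝ) * Real.pi / (4 * (K : ℝ) + 4) := by positivity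
  have hs := Real.sin_lt_sin_of_lt_of_le_pi_div_two (by linarith) hle hlt
  have : 0 ≤ Real.sin ((i : ℝ) * Real.pi / (4 * (K : ℝ) + 4)) :=
    Real.sin_nonneg_of_nonneg_of_le_pi h0 (by linarith)
  gcongr

/-- The sites with `K < |i| < N`. -/
def outer (N K : ℕ) : Finset ℤ := Icc (-(N : ℤ) + 1) ((N : ℤ) - 1) \ Icc (-(K : ℤ)) K

lemma mem_outer {N K : ℕ} {i : ℤ} : i ∈ outer N K ↔
    (-(N : ℤ) + 1 ≤ i ∧ i ≤ (N : ℤ) - 1) ∧ ¬ (-(K : ℤ) ≤ i ∧ i ≤ K) := by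
  simp [outer]

lemma card_outer (N K : ℕ) (hK : (K : ℤ) ≤ (N : ℤ) - 2) :
    (outer N K).card = 2 * N - 2 * K - 2 := by
  rw [outer, Finset.card_sdiff_of_subset (Finset.Icc_subset_Icc (by omega) (by omega)),
    Int.card_Icc, Int.card_Icc]
  omega

/-- The displacement with value `1` at the outer site `i`, value `0` at the other outer sites,
and affine on `[-K-1, K+1]`. -/
def hatE (N K : ℕ) (hK : (K : ℤ) ≤ (N : ℤ) - 2) (i : ↥(outer N K)) : ↥(Usub N) :=
  ⟨fun ℓ => if -(K : ℤ) ≤ ℓ ∧ ℓ ≤ (K : ℤ) then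
      (if (i : ℤ) = K + 1 then ((ℓ : ℝ) + K + 1) / (2 * K + 2)
        else if (i : ℤ) = -K - 1 then (K + 1 - (ℓ : ℝ)) / (2 * K + 2) else 0)
      else if ℓ = i then 1 else 0,
    fun ℓ hℓ => by
      have := (mem_outer.1 i.2).1
      exact (if_neg (by omega)).trans (if_neg (by omega))⟩

/-- The affine formula also holds at `ℓ = ±(K+1)`. -/
lemma hatE_apply (N K : ℕ) (hK : (K : ℤ) ≤ (N : ℤ) - 2) (i : ↥(outer N K)) (ℓ : ℤ)
    (h1 : -(K : ℤ) - 1 ≤ ℓ) (h2 : ℓ ≤ K + 1) :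
    (hatE N K hK i : ℤ → ℝ) ℓ =
      if (i : ℤ) = K + 1 then ((ℓ : ℝ) + K + 1) / (2 * K + 2)
        else if (i : ℤ) = -K - 1 then (K + 1 - (ℓ : ℝ)) / (2 * K + 2) else 0 := by
  have hK2 : 2 * (K : ℝ) + 2 ≠ 0 := by positivity
  by_cases h : -(K : ℤ) ≤ ℓ ∧ ℓ ≤ (K : ℤ)
  · exact if_pos h
  · refine (if_neg h).trans ?_
    rcases (by omega : ℓ = -(K : ℤ) - 1 ∨ ℓ = K + 1) with rfl | rfl
    · push_cast
      split_ifs <;> first | omega | (field_simp; done) | (field_simp; ring)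
    · push_cast
      split_ifs <;> first | omega | (field_simp; done) | (field_simp; ring)

lemma cutE_hatE (N K : ℕ) (hK : (K : ℤ) ≤ (N : ℤ) - 2) (i : ↥(outer N K)) :
    cutE N K hK (hatE N K hK i) = 0 := by
  ext ℓ
  show cutFun K (hatE N K hK i) ℓ = 0
  by_cases h : -(K : ℤ) ≤ ℓ ∧ ℓ ≤ (K : ℤ)
  · rw [cutFun, if_pos h, hatE_apply _ _ _ _ _ (by omega) (by omega),
      hatE_apply _ _ _ _ _ (by omega) (by omega), hatE_apply _ _ _ _ _ (by omega) (by omega)]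
    push_cast
    split_ifs <;> ring
  · rw [cutFun, if_neg h]

/-- The eigenbasis: sine modes on the inner sites and hats at the outer sites. -/
def eigE (N K : ℕ) (hK : (K : ℤ) ≤ (N : ℤ) - 2) :
    ↥(Icc 1 (2 * K + 1)) ⊕ ↥(outer N K) → ↥(Usub N) :=
  Sum.elim (fun j => sineE N K hK j) (hatE N K hK)

/-- Values at the outer sites recover the hat coefficients, because sines vanish there; the sine
modes are eigenvectors of `ε²χL` for distinct eigenvalues. -/
lemma eigE_linearIndependent (N K : ℕ) (hK : (K : ℤ) ≤ (N : ℤ) - 2) :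
    LinearIndependent ℝ (eigE N K hK) := by
  have hs : LinearIndependent ℝ (fun j : ↥(Icc 1 (2 * K + 1)) => sineE N K hK j) := by
    refine Module.End.eigenvectors_linearIndependent' (cutE N K hK)
      (fun j : ↥(Icc 1 (2 * K + 1)) => 4 * Real.sin ((j : ℝ) * Real.pi / (4 * (K : ℝ) + 4)) ^ 2)
      ?_ _ ?_
    · rintro ⟨i, hi⟩ ⟨j, hj⟩ hij
      rw [mem_Icc] at hi hj
      simp only at hij
      rcases lt_trichotomy i j with h | h | h
      · have := sin_sq_lt K h hj.2; linarith
      · exact Subtype.ext h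
      · have := sin_sq_lt K h hi.2; linarith
    · rintro ⟨j, hj⟩
      rw [mem_Icc] at hj
      exact Module.End.hasEigenvector_iff.2
        ⟨Module.End.mem_eigenspace_iff.2 (cutE_sineE N K hK j), sineE_ne_zero N K hK j hj.1 hj.2⟩
  rw [Fintype.linearIndependent_iff]
  intro g hg
  rw [Fintype.sum_sum_type] at hg
  simp only [eigE, Sum.elim_inl, Sum.elim_inr] at hg
  have hr : ∀ i, g (Sum.inr i) = 0 := by
    intro i
    have h := congrArg (fun w : ↥(Usub N) => (w : ℤ → ℝ) i) hg
    have hi := (mem_outer.1 i.2).2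
    have e1 : ∀ j : ℕ, (sineE N K hK j : ℤ → ℝ) i = 0 := fun j => if_neg hi
    have e2 : ∀ k, (hatE N K hK k : ℤ → ℝ) i = if i = k then 1 else 0 := by
      intro k
      refine (if_neg hi).trans ?_
      simp only [Subtype.ext_iff]
    simpa [Submodule.coe_sum, Finset.sum_apply, e1, e2] using h
  simp only [hr, zero_smul, Finset.sum_const_zero, add_zero] at hg
  have hl := Fintype.linearIndependent_iff.1 hs _ hg
  rintro (i | i)
  · exact hl i
  · exact hr i

/-! ### The spectrum -/

lemma card_specMul (N K : ℕ) (hK : (K : ℤ) ≤ (N : ℤ) - 2) (φF φ2F : ℝ) :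
    (specMul N K φF φ2F).card = 2 * N - 1 := by
  simp [specMul]
  omega

lemma count_specMul (N K : ℕ) (hN : 2 ≤ N) (hK : (K : ℤ) ≤ (N : ℤ) - 2)
    (φF φ2F : ℝ) (T : Module.End ℝ ↥(Usub N))
    (hT : ∀ u v : ↥(Usub N), ipE N ((T u : ℤ → ℝ)) (v : ℤ → ℝ)
            = Bqnl N K φF φ2F (u : ℤ → ℝ) (v : ℤ → ℝ)) (μ : ℝ) :
    (specMul N K φF φ2F).count μ = Module.finrank ℝ ↥(LinearMap.ker (T - μ • LapE N)) := by
  let f : ℕ → ℝ := fun j => (φF + 4 * φ2F)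
        - 4 * φ2F * Real.sin ((j : ℝ) * Real.pi / (4 * (K : ℝ) + 4)) ^ 2
  rw [finrank_ker_of_eigenfamily T (LapE N) (LapE_injective N hN) (eigE N K hK)
    (eigE_linearIndependent N K hK) ?_
    (Sum.elim (fun j => f j) (fun _ => φF + 4 * φ2F)) ?_ μ]
  · have hsplit : Fintype.card {i : ↥(Icc 1 (2 * K + 1)) ⊕ ↥(outer N K) //
        Sum.elim (fun j : ↥(Icc 1 (2 * K + 1)) => f j) (fun _ => φF + 4 * φ2F) i = μ}
        = (∑ j : ↥(Icc 1 (2 * K + 1)), if f j = μ then 1 else 0)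
          + ∑ _i : ↥(outer N K), if φF + 4 * φ2F = μ then 1 else 0 := by
      rw [Fintype.card_subtype, Finset.card_filter, Fintype.sum_sum_type]
      congr
    rw [hsplit, Finset.sum_coe_sort (Icc 1 (2 * K + 1)) (fun j => if f j = μ then 1 else 0),
      Finset.sum_const, Finset.card_univ, Fintype.card_coe, card_outer N K hK,
      ← Finset.card_filter, specMul, Multiset.count_add, Multiset.count_replicate,
      Multiset.count_map]
    congr 1
    · rw [Finset.card_def, Finset.filter_val]
      simp only [f, eq_comm]
    · split_ifs <;> simp
  · rw [Fintype.card_sum, Fintype.card_coe, Fintype.card_coe, card_outer N K hK,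
      finrank_Usub N hN, Nat.card_Icc]
    omega
  · rintro (j | i)
    · show T (sineE N K hK j) = f j • LapE N (sineE N K hK j)
      rw [T_eq N K hN hK φF φ2F T hT, cutE_sineE, map_smul]
      simp only [f]
      module
    · show T (hatE N K hK i) = (φF + 4 * φ2F) • LapE N (hatE N K hK i)
      rw [T_eq N K hN hK φF φ2F T hT, cutE_hatE, map_zero, smul_zero, sub_zero]

/-- Spectrum of the preconditioned QNL operator: for 1 ≤ K ≤ N−2 and A_F > 0, the
generalized eigenvalue problem L^qnl v = μ L v on U has exactly 2N−1 eigenvalues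
counted with multiplicity, whose multiset is `specMul`; if moreover φ''_{2F} ≤ 0, all
eigenvalues lie in [A_F, φ''_F] and the ratio of the largest to the smallest eigenvalue
equals 1 − (4φ''_{2F}/A_F) sin²((2K+1)π/(4K+4)) = φ''_F/A_F + (4φ''_{2F}/A_F) sin²(π/(4K+4)). -/
theorem stmt11 (N K : ℕ) (hN : 2 ≤ N) (hK1 : 1 ≤ K) (hK2 : (K : ℤ) ≤ (N : ℤ) - 2)
    (φF φ2F : ℝ) (hAF : 0 < φF + 4 * φ2F)
    (T : Module.End ℝ ↥(Usub N))
    (hT : ∀ u v : ↥(Usub N), ipE N ((T u : ℤ → ℝ)) (v : ℤ → ℝ)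
            = Bqnl N K φF φ2F (u : ℤ → ℝ) (v : ℤ → ℝ)) :
    (specMul N K φF φ2F).card = 2 * N - 1
    ∧ (∀ μ : ℝ, (specMul N K φF φ2F).count μ
          = Module.finrank ℝ ↥(LinearMap.ker (T - μ • LapE N)))
    ∧ (φ2F ≤ 0 →
        (∀ μ : ℝ, (∃ v : ↥(Usub N), v ≠ 0 ∧ T v = μ • (LapE N v)) →
            (φF + 4 * φ2F) ≤ μ ∧ μ ≤ φF)
        ∧ sSup {μ : ℝ | ∃ v : ↥(Usub N), v ≠ 0 ∧ T v = μ • (LapE N v)}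
              / sInf {μ : ℝ | ∃ v : ↥(Usub N), v ≠ 0 ∧ T v = μ • (LapE N v)}
            = 1 - (4 * φ2F / (φF + 4 * φ2F))
                * Real.sin ((2 * (K : ℝ) + 1) * Real.pi / (4 * (K : ℝ) + 4)) ^ 2
        ∧ 1 - (4 * φ2F / (φF + 4 * φ2F))
                * Real.sin ((2 * (K : ℝ) + 1) * Real.pi / (4 * (K : ℝ) + 4)) ^ 2
            = φF / (φF + 4 * φ2F)
              + (4 * φ2F / (φF + 4 * φ2F))
                * Real.sin (Real.pi / (4 * (K : ℝ) + 4)) ^ 2) := by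
  have hcount := count_specMul N K hN hK2 φF φ2F T hT
  refine ⟨card_specMul N K hK2 φF φ2F, hcount, fun hφ => ?_⟩
  have hset : {μ : ℝ | ∃ v : ↥(Usub N), v ≠ 0 ∧ T v = μ • (LapE N v)}
      = {μ | μ ∈ specMul N K φF φ2F} := by
    ext μ
    show _ ↔ μ ∈ specMul N K φF φ2F
    rw [← Multiset.count_pos, hcount μ]
    refine Iff.trans ?_ (Submodule.one_le_finrank_iff
      (S := LinearMap.ker (T - μ • LapE N))).symm
    rw [Submodule.ne_bot_iff]
    refine exists_congr fun v => ?_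
    rw [LinearMap.mem_ker, LinearMap.sub_apply, LinearMap.smul_apply, sub_eq_zero, and_comm]
  have hmem : ∀ μ, μ ∈ specMul N K φF φ2F ↔ (∃ j : ℕ, (1 ≤ j ∧ j ≤ 2 * K + 1) ∧
      (φF + 4 * φ2F) - 4 * φ2F * Real.sin ((j : ℝ) * Real.pi / (4 * (K : ℝ) + 4)) ^ 2 = μ)
      ∨ μ = φF + 4 * φ2F := by
    intro μ
    have : 2 * N - 2 * K - 2 ≠ 0 := by omega
    simp [specMul, Multiset.mem_replicate, this]
  set A := φF + 4 * φ2F with hA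
  set M := A - 4 * φ2F * Real.sin ((2 * (K : ℝ) + 1) * Real.pi / (4 * (K : ℝ) + 4)) ^ 2 with hM
  -- `j = 2K+1` gives the largest eigenvalue; the smallest, `A_F`, occurs because
  -- `2N-2K-2 > 0`.
  have hmax : IsGreatest {μ | μ ∈ specMul N K φF φ2F} M := by
    constructor
    · refine (hmem _).2 (Or.inl ⟨2 * K + 1, ⟨by omega, le_rfl⟩, ?_⟩)
      push_cast; rfl
    · intro μ hμ
      rcases (hmem μ).1 hμ with ⟨j, ⟨_, h2⟩, rfl⟩ | rfl
      · have hle : Real.sin ((j : ℝ) * Real.pi / (4 * (K : ℝ) + 4)) ^ 2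
            ≤ Real.sin ((2 * (K : ℝ) + 1) * Real.pi / (4 * (K : ℝ) + 4)) ^ 2 := by
          rcases h2.lt_or_eq with h | rfl
          · have := sin_sq_lt K h le_rfl
            push_cast at this
            exact this.le
          · push_cast; rfl
        nlinarith
      · nlinarith [sq_nonneg (Real.sin ((2 * (K : ℝ) + 1) * Real.pi / (4 * (K : ℝ) + 4)))]
  have hmin : IsLeast {μ | μ ∈ specMul N K φF φ2F} A := by
    constructor
    · exact (hmem _).2 (Or.inr rfl)
    · intro μ hμ
      rcases (hmem μ).1 hμ with ⟨j, _, rfl⟩ | rfl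
      · nlinarith [sq_nonneg (Real.sin ((j : ℝ) * Real.pi / (4 * (K : ℝ) + 4)))]
      · exact le_rfl
  refine ⟨fun μ hμ => ?_, ?_, ?_⟩
  · have hμ' : μ ∈ {μ | μ ∈ specMul N K φF φ2F} := hset ▸ hμ
    refine ⟨hmin.2 hμ', (hmax.2 hμ').trans ?_⟩
    nlinarith [Real.sin_sq_le_one ((2 * (K : ℝ) + 1) * Real.pi / (4 * (K : ℝ) + 4))]
  · rw [hset, hmax.csSup_eq, hmin.csInf_eq, hM]
    field_simp
    -- The two angles are complementary, so the two squared sines add up to one.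
  · have hcos : Real.sin ((2 * (K : ℝ) + 1) * Real.pi / (4 * (K : ℝ) + 4))
        = Real.cos (Real.pi / (4 * (K : ℝ) + 4)) := by
      rw [← Real.sin_pi_div_two_sub]
      congr 1
      field_simp
      ring
    rw [hcos, Real.cos_sq', hA]
    rw [hA] at hAF
    field_simp
    ring

end
end
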